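/- Let d ∈ {1, 2} and let x, y ∈ ℤ^d with y ≠ 0, x ≠ 0 and x ≠ y. Then lim_{λ→0+} (G_λ(x, y) G_λ(0, 0) - G_λ(0, x) G_λ(0, y)) / (G_λ(0, 0)² - G_λ(0, y)²) = (ρ_d(x) + ρ_d(y) - ρ_d(y - x)) / (2 ρ_d(y)). (This limit is the total mass H_{x,y,0}(∞) of the taboo hitting-time distribution, since the quotient is its Laplace–Stieltjes transform.) -/

import Mathlib

open MeasureTheory Real Filter Topology Asymptotics

/-- Fourier symbol `φ(θ) = ∑_z a(z) cos⟨z,θ⟩` of the random walk on `ℤ^d`. -/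
noncomputable def phiSymb (d : ℕ) (a : (Fin d → ℤ) → ℝ) (θ : Fin d → ℝ) : ℝ :=
  ∑' z : Fin d → ℤ, a z * Real.cos (∑ i, (z i : ℝ) * θ i)

/-- Transition probability `p(t;x,y) = (2π)^{-d} ∫_{[-π,π]^d} e^{φ(θ)t} cos⟨θ,y-x⟩ dθ`. -/
noncomputable def ptrans (d : ℕ) (a : (Fin d → ℤ) → ℝ) (t : ℝ) (x y : Fin d → ℤ) : ℝ :=
  ((2 * π) ^ d)⁻¹ *
    ∫ θ in Set.Icc (fun _ : Fin d => -π) (fun _ : Fin d => π),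
      Real.exp (phiSymb d a θ * t) * Real.cos (∑ i, θ i * ((y i : ℝ) - (x i : ℝ)))

/-- Laplace transform `G_λ(x,y) = ∫_0^∞ e^{-λt} p(t;x,y) dt` (Green's function at `λ = 0`). -/
noncomputable def Glam (d : ℕ) (a : (Fin d → ℤ) → ℝ) (lam : ℝ) (x y : Fin d → ℤ) : ℝ :=
  ∫ t in Set.Ioi (0 : ℝ), Real.exp (-lam * t) * ptrans d a t x y

/-- Hessian matrix `φ''(0)`, with entries `-∑_z a(z) z_i z_j`. -/
noncomputable def hessPhi (d : ℕ) (a : (Fin d → ℤ) → ℝ) : Matrix (Fin d) (Fin d) ℝ :=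
  Matrix.of fun i j => -∑' z : Fin d → ℤ, a z * (z i : ℝ) * (z j : ℝ)

/-- `γ_d = (2π)^{-d/2} |det φ''(0)|^{-1/2}`. -/
noncomputable def gammaConst (d : ℕ) (a : (Fin d → ℤ) → ℝ) : ℝ :=
  ((2 * π) ^ ((d : ℝ) / 2))⁻¹ * (Real.sqrt |(hessPhi d a).det|)⁻¹

/-- `ρ_d(x) = (a/(2π)^d) ∫_{[-π,π]^d} (cos⟨x,θ⟩ - 1)/φ(θ) dθ` for `x ≠ 0`, and `ρ_d(0) = 1`. -/
noncomputable def rhoConst (d : ℕ) (a : (Fin d → ℤ) → ℝ) (x : Fin d → ℤ) : ℝ :=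
  if x = 0 then 1 else
    (-(a 0) / (2 * π) ^ d) *
      ∫ θ in Set.Icc (fun _ : Fin d => -π) (fun _ : Fin d => π),
        (Real.cos (∑ i, (x i : ℝ) * θ i) - 1) / phiSymb d a θ

/-- `γ̃_d(z) = (1/(2(2π)^d)) ∫_{ℝ^d} ⟨v,z⟩² e^{⟨φ''(0)v,v⟩/2} dv`. -/
noncomputable def gammaTilde (d : ℕ) (a : (Fin d → ℤ) → ℝ) (z : Fin d → ℤ) : ℝ :=
  (2 * (2 * π) ^ d)⁻¹ *
    ∫ v : Fin d → ℝ, (∑ i, v i * (z i : ℝ)) ^ 2 *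
      Real.exp ((∑ i, (hessPhi d a).mulVec v i * v i) / 2)

section TabooAux

variable {d : ℕ} {a : (Fin d → ℤ) → ℝ}

/-- The pairing `⟨w, θ⟩` of a lattice point with a frequency. -/
noncomputable def latticePairing (w : Fin d → ℤ) (θ : Fin d → ℝ) : ℝ :=
  ∑ i, (w i : ℝ) * θ i

lemma continuous_latticePairing (w : Fin d → ℤ) : Continuous (latticePairing w) := by
  unfold latticePairing
  fun_prop

/-- The Brillouin zone `[-π, π]^d`. -/
def brillouinZone (d : ℕ) : Set (Fin d → ℝ) :=
  Set.Icc (fun _ => -π) (fun _ => π)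

lemma isCompact_brillouinZone : IsCompact (brillouinZone d) := isCompact_Icc

lemma measurableSet_brillouinZone : MeasurableSet (brillouinZone d) := measurableSet_Icc

lemma ball_one_subset_brillouinZone : Metric.ball (0 : Fin d → ℝ) 1 ⊆ brillouinZone d := by
  intro θ hθ
  have h : ∀ i, |θ i| < 1 := fun i => by
    have := norm_le_pi_norm θ i
    rw [Real.norm_eq_abs] at this
    exact this.trans_lt (by simpa using hθ)
  have hπ := Real.pi_gt_three
  exact ⟨fun i => by have := abs_lt.1 (h i); simp only; linarith,
    fun i => by have := abs_lt.1 (h i); simp only; linarith⟩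

lemma one_sub_cos_add_le (u v : ℝ) :
    1 - cos (u + v) ≤ 2 * (1 - cos u) + 2 * (1 - cos v) := by
  have hu := Real.sin_sq_add_cos_sq u
  have hv := Real.sin_sq_add_cos_sq v
  rw [Real.cos_add]
  nlinarith [sq_nonneg (sin u - sin v), sq_nonneg (cos u + cos v - 2)]

lemma abs_mul_cos_le (b u : ℝ) : ‖b * cos u‖ ≤ |b| := by
  rw [Real.norm_eq_abs, abs_mul]
  exact mul_le_of_le_one_right (abs_nonneg _) (abs_cos_le_one _)

lemma summable_mul_cos (ha : Summable a) (θ : Fin d → ℝ) :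
    Summable fun z => a z * cos (latticePairing z θ) :=
  Summable.of_norm_bounded ha.abs fun _ => abs_mul_cos_le _ _

lemma continuous_phiSymb (ha : Summable a) : Continuous (phiSymb d a) := by
  unfold phiSymb
  exact continuous_tsum (fun z => by fun_prop) ha.abs fun _ _ => abs_mul_cos_le _ _

lemma hasSum_neg_phiSymb (hsum : HasSum a 0) (θ : Fin d → ℝ) :
    HasSum (fun z => a z * (1 - cos (latticePairing z θ))) (-phiSymb d a θ) := by
  have h : HasSum (fun z => a z - a z * cos (latticePairing z θ)) (0 - phiSymb d a θ) :=
    hsum.sub (summable_mul_cos hsum.summable θ).hasSum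
  simpa only [mul_sub, mul_one, zero_sub] using h

lemma mul_one_sub_cos_nonneg (hpos : ∀ z : Fin d → ℤ, z ≠ 0 → 0 ≤ a z)
    (z : Fin d → ℤ) (θ : Fin d → ℝ) : 0 ≤ a z * (1 - cos (latticePairing z θ)) := by
  by_cases hz : z = 0
  · simp [hz, latticePairing]
  · exact mul_nonneg (hpos z hz) (sub_nonneg.2 (cos_le_one _))

lemma neg_phiSymb_nonneg (hpos : ∀ z : Fin d → ℤ, z ≠ 0 → 0 ≤ a z) (hsum : HasSum a 0)
    (θ : Fin d → ℝ) : 0 ≤ -phiSymb d a θ :=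
  (hasSum_neg_phiSymb hsum θ).nonneg fun z => mul_one_sub_cos_nonneg hpos z θ

/-- Since the walk is irreducible, its symbol dominates every `1 - cos ⟨w, θ⟩`. -/
lemma exists_one_sub_cos_le (hpos : ∀ z : Fin d → ℤ, z ≠ 0 → 0 ≤ a z) (hsum : HasSum a 0)
    (hirr : AddSubgroup.closure {z : Fin d → ℤ | 0 < a z} = ⊤) (w : Fin d → ℤ) :
    ∃ C, 0 ≤ C ∧ ∀ θ, 1 - cos (latticePairing w θ) ≤ C * -phiSymb d a θ := by
  have hw : w ∈ AddSubgroup.closure {z : Fin d → ℤ | 0 < a z} := hirr ▸ AddSubgroup.mem_top w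
  induction hw using AddSubgroup.closure_induction with
  | mem z hz =>
    have hz : 0 < a z := hz
    refine ⟨(a z)⁻¹, by positivity, fun θ => ?_⟩
    rw [inv_mul_eq_div, le_div_iff₀' hz]
    exact le_hasSum (hasSum_neg_phiSymb hsum θ) z fun j _ => mul_one_sub_cos_nonneg hpos j θ
  | zero => exact ⟨0, le_rfl, fun θ => by simp [latticePairing]⟩
  | add u v _ _ hu hv =>
    obtain ⟨C, hC0, hC⟩ := hu
    obtain ⟨E, hE0, hE⟩ := hv
    refine ⟨2 * C + 2 * E, by positivity, fun θ => ?_⟩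
    have h : latticePairing (u + v) θ = latticePairing u θ + latticePairing v θ := by
      simp [latticePairing, add_mul, Finset.sum_add_distrib]
    rw [h]
    linarith [one_sub_cos_add_le (latticePairing u θ) (latticePairing v θ), hC θ, hE θ]
  | neg u _ hu =>
    obtain ⟨C, hC0, hC⟩ := hu
    refine ⟨C, hC0, fun θ => ?_⟩
    have h : latticePairing (-u) θ = -latticePairing u θ := by simp [latticePairing]
    rw [h, cos_neg]
    exact hC θ

lemma sq_latticePairing_le (z : Fin d → ℤ) (θ : Fin d → ℝ) :
    latticePairing z θ ^ 2 ≤ (∑ i, (z i : ℝ) ^ 2) * (d * ‖θ‖ ^ 2) := by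
  refine (Finset.sum_mul_sq_le_sq_mul_sq _ _ _).trans
    (mul_le_mul_of_nonneg_left ?_ (Finset.sum_nonneg fun i _ => sq_nonneg _))
  calc ∑ i, θ i ^ 2 ≤ ∑ _i : Fin d, ‖θ‖ ^ 2 := Finset.sum_le_sum fun i _ => by
        rw [← sq_abs, ← Real.norm_eq_abs]
        exact pow_le_pow_left₀ (norm_nonneg _) (norm_le_pi_norm θ i) 2
    _ = d * ‖θ‖ ^ 2 := by simp

/-- A finite second moment makes the symbol at most quadratic. -/
lemma exists_neg_phiSymb_le (hpos : ∀ z : Fin d → ℤ, z ≠ 0 → 0 ≤ a z) (hsum : HasSum a 0)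
    (hvar : Summable fun z : Fin d → ℤ => (∑ i, ((z i : ℝ)) ^ 2) * a z) :
    ∃ B, 0 < B ∧ ∀ θ, -phiSymb d a θ ≤ B * ‖θ‖ ^ 2 := by
  set S := ∑' z : Fin d → ℤ, (∑ i, ((z i : ℝ)) ^ 2) * a z with hS
  have hS0 : 0 ≤ S := tsum_nonneg fun z => by
    by_cases hz : z = 0
    · simp [hz]
    · exact mul_nonneg (Finset.sum_nonneg fun i _ => sq_nonneg _) (hpos z hz)
  refine ⟨S * d + 1, by positivity, fun θ => ?_⟩
  have h : -phiSymb d a θ ≤ S * (d * ‖θ‖ ^ 2) := by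
    refine hasSum_le (fun z => ?_) (hasSum_neg_phiSymb hsum θ) (hvar.hasSum.mul_right _)
    by_cases hz : z = 0
    · simp [hz, latticePairing]
    · have h1 := Real.one_sub_sq_div_two_le_cos (x := latticePairing z θ)
      have h2 := sq_latticePairing_le z θ
      have h3 : 1 - cos (latticePairing z θ) ≤ (∑ i, (z i : ℝ) ^ 2) * (d * ‖θ‖ ^ 2) := by
        nlinarith [sq_nonneg (latticePairing z θ)]
      calc a z * (1 - cos (latticePairing z θ))
          ≤ a z * ((∑ i, (z i : ℝ) ^ 2) * (d * ‖θ‖ ^ 2)) :=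
            mul_le_mul_of_nonneg_left h3 (hpos z hz)
        _ = _ := by ring
  nlinarith [sq_nonneg ‖θ‖]

/-- The Fourier representation of the Green function. -/
lemma Glam_eq_integral (hpos : ∀ z : Fin d → ℤ, z ≠ 0 → 0 ≤ a z) (hsum : HasSum a 0)
    {lam : ℝ} (hlam : 0 < lam) (x y : Fin d → ℤ) :
    Glam d a lam x y = ((2 * π) ^ d)⁻¹ *
      ∫ θ in brillouinZone d, cos (latticePairing (y - x) θ) / (lam - phiSymb d a θ) := by
  have hφ := continuous_phiSymb hsum.summable
  have hpair : ∀ θ : Fin d → ℝ,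
      ∑ i, θ i * ((y i : ℝ) - (x i : ℝ)) = latticePairing (y - x) θ := fun θ => by
    simp [latticePairing, mul_comm]
  have hcos := continuous_latticePairing (y - x)
  have : IsFiniteMeasure (volume.restrict (brillouinZone d)) :=
    ⟨by simpa using (isCompact_brillouinZone (d := d)).measure_lt_top⟩
  set F : ℝ → (Fin d → ℝ) → ℝ := fun t θ =>
    exp (-lam * t) * (exp (phiSymb d a θ * t) * cos (latticePairing (y - x) θ)) with hF
  have hint : Integrable (Function.uncurry F)
      ((volume.restrict (Set.Ioi (0 : ℝ))).prod (volume.restrict (brillouinZone d))) := by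
    have hdom : Integrable (fun q : ℝ × (Fin d → ℝ) => exp (-lam * q.1) * 1)
        ((volume.restrict (Set.Ioi (0 : ℝ))).prod (volume.restrict (brillouinZone d))) :=
      Integrable.mul_prod (f := fun t : ℝ => exp (-lam * t)) (g := fun _ => (1 : ℝ))
        (exp_neg_integrableOn_Ioi 0 hlam) (integrable_const 1)
    refine hdom.mono' (Continuous.aestronglyMeasurable ?_) ?_
    · simp only [hF, Function.uncurry_def]
      fun_prop
    · rw [Measure.prod_restrict]
      filter_upwards [ae_restrict_mem (measurableSet_Ioi.prod measurableSet_brillouinZone)]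
        with q hq
      have ht : 0 < q.1 := hq.1
      simp only [hF, Function.uncurry_def, norm_mul, Real.norm_eq_abs, abs_exp]
      refine mul_le_mul_of_nonneg_left ?_ (exp_pos _).le
      refine mul_le_one₀ (exp_le_one_iff.2 ?_) (abs_nonneg _) (abs_cos_le_one _)
      nlinarith [neg_phiSymb_nonneg hpos hsum q.2]
  have hswap := integral_integral_swap hint
  have hinner : ∀ θ, ∫ t in Set.Ioi (0 : ℝ), F t θ
      = cos (latticePairing (y - x) θ) / (lam - phiSymb d a θ) := fun θ => by
    have hneg : phiSymb d a θ - lam < 0 := by linarith [neg_phiSymb_nonneg hpos hsum θ]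
    have hrw : ∀ t, F t θ
        = exp ((phiSymb d a θ - lam) * t) * cos (latticePairing (y - x) θ) := fun t => by
      simp only [hF]
      rw [← mul_assoc, ← exp_add]
      ring_nf
    simp only [hrw]
    rw [integral_mul_const, integral_exp_mul_Ioi hneg]
    have h1 : phiSymb d a θ - lam ≠ 0 := hneg.ne
    have h2 : lam - phiSymb d a θ ≠ 0 := by linarith
    rw [mul_zero, exp_zero, ← neg_sub lam, neg_div_neg_eq]
    ring
  simp only [hinner] at hswap
  rw [← hswap, ← integral_const_mul]
  unfold Glam ptrans
  refine integral_congr_ae (ae_of_all _ fun t => ?_)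
  simp only [hpair, hF]
  rw [integral_const_mul]
  simp only [brillouinZone]
  ring

lemma integrableOn_cos_div (hpos : ∀ z : Fin d → ℤ, z ≠ 0 → 0 ≤ a z) (hsum : HasSum a 0)
    {lam : ℝ} (hlam : 0 < lam) (w : Fin d → ℤ) :
    IntegrableOn (fun θ => cos (latticePairing w θ) / (lam - phiSymb d a θ))
      (brillouinZone d) := by
  refine ContinuousOn.integrableOn_compact isCompact_brillouinZone (Continuous.continuousOn ?_)
  exact (continuous_cos.comp (continuous_latticePairing w)).div
    (continuous_const.sub (continuous_phiSymb hsum.summable))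
    fun θ => by linarith [neg_phiSymb_nonneg hpos hsum θ]

lemma latticePairing_zero (θ : Fin d → ℝ) : latticePairing 0 θ = 0 := by
  simp [latticePairing]

lemma Glam_sub_Glam_eq_integral (hpos : ∀ z : Fin d → ℤ, z ≠ 0 → 0 ≤ a z) (hsum : HasSum a 0)
    {lam : ℝ} (hlam : 0 < lam) (x y : Fin d → ℤ) :
    Glam d a lam 0 0 - Glam d a lam x y = ((2 * π) ^ d)⁻¹ *
      ∫ θ in brillouinZone d, (1 - cos (latticePairing (y - x) θ)) / (lam - phiSymb d a θ) := by
  rw [Glam_eq_integral hpos hsum hlam, Glam_eq_integral hpos hsum hlam, ← mul_sub,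
    ← integral_sub (integrableOn_cos_div hpos hsum hlam _)
      (integrableOn_cos_div hpos hsum hlam _)]
  simp only [sub_zero, latticePairing_zero, cos_zero, sub_div]

/-- The potential kernel `(2π)^{-d} ∫ (1 - cos ⟨w, θ⟩) / (-φ(θ)) dθ`. -/
noncomputable def potentialKernel (d : ℕ) (a : (Fin d → ℤ) → ℝ) (w : Fin d → ℤ) : ℝ :=
  ((2 * π) ^ d)⁻¹ *
    ∫ θ in brillouinZone d, (1 - cos (latticePairing w θ)) / -phiSymb d a θ

lemma rhoConst_eq (w : Fin d → ℤ) (hw : w ≠ 0) :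
    rhoConst d a w = -a 0 * potentialKernel d a w := by
  rw [rhoConst, if_neg hw, potentialKernel, div_eq_mul_inv, mul_assoc]
  congr 2
  refine integral_congr_ae (ae_of_all _ fun θ => ?_)
  simp only [latticePairing]
  rw [← neg_div_neg_eq, neg_sub]

lemma one_sub_cos_div_bounds (hpos : ∀ z : Fin d → ℤ, z ≠ 0 → 0 ≤ a z) (hsum : HasSum a 0)
    {C : ℝ} {w : Fin d → ℤ} {θ : Fin d → ℝ} (hC0 : 0 ≤ C)
    (hC : 1 - cos (latticePairing w θ) ≤ C * -phiSymb d a θ) {lam : ℝ} (hlam : 0 ≤ lam) :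
    ‖(1 - cos (latticePairing w θ)) / (lam - phiSymb d a θ)‖ ≤ C := by
  have h0 := neg_phiSymb_nonneg hpos hsum θ
  have h1 : 0 ≤ 1 - cos (latticePairing w θ) := sub_nonneg.2 (cos_le_one _)
  have h2 : 0 ≤ lam - phiSymb d a θ := by linarith
  rw [Real.norm_of_nonneg (div_nonneg h1 h2)]
  refine div_le_of_le_mul₀ h2 hC0 (hC.trans ?_)
  exact mul_le_mul_of_nonneg_left (by linarith) hC0

lemma tendsto_Glam_sub_Glam (hpos : ∀ z : Fin d → ℤ, z ≠ 0 → 0 ≤ a z) (hsum : HasSum a 0)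
    (hirr : AddSubgroup.closure {z : Fin d → ℤ | 0 < a z} = ⊤) (x y : Fin d → ℤ) :
    Tendsto (fun lam => Glam d a lam 0 0 - Glam d a lam x y) (𝓝[>] 0)
      (𝓝 (potentialKernel d a (y - x))) := by
  obtain ⟨C, hC0, hC⟩ := exists_one_sub_cos_le hpos hsum hirr (y - x)
  have hφ := continuous_phiSymb hsum.summable
  have hcos := continuous_latticePairing (y - x)
  have hev : ∀ᶠ lam : ℝ in 𝓝[>] 0, 0 < lam := self_mem_nhdsWithin
  refine Tendsto.congr' (hev.mono fun lam hlam =>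
    (Glam_sub_Glam_eq_integral hpos hsum hlam x y).symm) ?_
  refine Tendsto.const_mul _ (tendsto_integral_filter_of_dominated_convergence (fun _ => C)
    ?_ ?_ ?_ ?_)
  · refine Eventually.of_forall fun lam => Measurable.aestronglyMeasurable ?_
    exact (measurable_const.sub (continuous_cos.comp hcos).measurable).div
      (measurable_const.sub hφ.measurable)
  · exact hev.mono fun lam hlam => ae_of_all _ fun θ =>
      one_sub_cos_div_bounds hpos hsum hC0 (hC θ) hlam.le
  · exact integrableOn_const isCompact_brillouinZone.measure_lt_top.ne
  · refine ae_of_all _ fun θ => ?_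
    rcases (neg_phiSymb_nonneg hpos hsum θ).eq_or_lt with h | h
    · have h1 : 1 - cos (latticePairing (y - x) θ) = 0 :=
        le_antisymm (by simpa [← h] using hC θ) (sub_nonneg.2 (cos_le_one _))
      simp [h1]
    · refine Tendsto.div tendsto_const_nhds ?_ h.ne'
      rw [← zero_sub]
      exact (tendsto_id.mono_left nhdsWithin_le_nhds).sub_const _

lemma exists_cos_latticePairing_lt_one {w : Fin d → ℤ} (hw : w ≠ 0) :
    ∃ θ ∈ Metric.ball (0 : Fin d → ℝ) 1, cos (latticePairing w θ) < 1 := by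
  obtain ⟨i, hi⟩ := Function.ne_iff.1 hw
  have hi : w i ≠ 0 := hi
  have hiR : (w i : ℝ) ≠ 0 := by exact_mod_cast hi
  have habs : (1 : ℝ) ≤ |(w i : ℝ)| := by exact_mod_cast Int.one_le_abs hi
  refine ⟨Pi.single i ((2 * (w i : ℝ))⁻¹), ?_, ?_⟩
  · rw [mem_ball_zero_iff, Pi.norm_single, norm_inv, norm_mul, Real.norm_eq_abs,
      Real.norm_eq_abs, abs_two]
    exact inv_lt_one_of_one_lt₀ (by linarith)
  · have h : latticePairing w (Pi.single i ((2 * (w i : ℝ))⁻¹)) = 1 / 2 := by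
      simp only [latticePairing]
      rw [Finset.sum_eq_single i]
      · rw [Pi.single_eq_same]
        field_simp
      · intro j _ hj
        simp [hj]
      · simp
    rw [h]
    exact (cos_lt_cos_of_nonneg_of_le_pi_div_two le_rfl
      (by linarith [Real.pi_gt_three]) (by norm_num)).trans_eq cos_zero

lemma potentialKernel_pos (hpos : ∀ z : Fin d → ℤ, z ≠ 0 → 0 ≤ a z) (hsum : HasSum a 0)
    (hirr : AddSubgroup.closure {z : Fin d → ℤ | 0 < a z} = ⊤) {w : Fin d → ℤ} (hw : w ≠ 0) :
    0 < potentialKernel d a w := by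
  obtain ⟨C, hC0, hC⟩ := exists_one_sub_cos_le hpos hsum hirr w
  have hφ := continuous_phiSymb hsum.summable
  have hcos := continuous_latticePairing w
  refine mul_pos (by positivity) ?_
  have hnn : ∀ θ, 0 ≤ (1 - cos (latticePairing w θ)) / -phiSymb d a θ := fun θ =>
    div_nonneg (sub_nonneg.2 (cos_le_one _)) (neg_phiSymb_nonneg hpos hsum θ)
  have hmeas : Measurable fun θ => (1 - cos (latticePairing w θ)) / -phiSymb d a θ :=
    (measurable_const.sub (continuous_cos.comp hcos).measurable).div hφ.measurable.neg
  have hint : IntegrableOn (fun θ => (1 - cos (latticePairing w θ)) / -phiSymb d a θ)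
      (brillouinZone d) := by
    refine Integrable.mono' (g := fun _ => C)
      (integrableOn_const isCompact_brillouinZone.measure_lt_top.ne)
      hmeas.aestronglyMeasurable (ae_of_all _ fun θ => ?_)
    simpa using one_sub_cos_div_bounds hpos hsum hC0 (hC θ) le_rfl
  rw [integral_pos_iff_support_of_nonneg hnn hint,
    Measure.restrict_apply' measurableSet_brillouinZone]
  have hopen : IsOpen (Metric.ball (0 : Fin d → ℝ) 1 ∩ {θ | cos (latticePairing w θ) < 1}) :=
    Metric.isOpen_ball.inter (isOpen_lt (continuous_cos.comp hcos) continuous_const)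
  refine (hopen.measure_pos volume ?_).trans_le (measure_mono ?_)
  · obtain ⟨θ, h1, h2⟩ := exists_cos_latticePairing_lt_one hw
    exact ⟨θ, h1, h2⟩
  · rintro θ ⟨h1, h2⟩
    refine ⟨?_, ball_one_subset_brillouinZone h1⟩
    have h2 : cos (latticePairing w θ) < 1 := h2
    have h3 : 0 < 1 - cos (latticePairing w θ) := by linarith
    have h4 : phiSymb d a θ ≠ 0 := fun h => by
      have := hC θ
      rw [h] at this
      linarith
    exact div_ne_zero h3.ne' (neg_ne_zero.2 h4)

lemma integral_div_add_sq {B lam : ℝ} (hB : 0 < B) (hlam : 0 < lam) :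
    ∫ r in (0 : ℝ)..1, r / (lam + B * r ^ 2) = (log (lam + B) - log lam) / (2 * B) := by
  have hne : ∀ r : ℝ, lam + B * r ^ 2 ≠ 0 := fun r => by positivity
  have hderiv : ∀ r ∈ Set.uIcc (0 : ℝ) 1,
      HasDerivAt (fun r : ℝ => log (lam + B * r ^ 2) / (2 * B)) (r / (lam + B * r ^ 2)) r := by
    intro r _
    have h := ((((hasDerivAt_pow 2 r).const_mul B).const_add lam).log (hne r)).div_const (2 * B)
    refine h.congr_deriv ?_
    have := hne r
    field_simp
    simp [mul_comm]
  rw [intervalIntegral.integral_eq_sub_of_hasDerivAt hderiv]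
  · simp [sub_div]
  · exact (Continuous.div (by fun_prop) (by fun_prop) hne).intervalIntegrable _ _

/-- In dimension at most two, the radial integral of `1 / (λ + B ‖θ‖²)` diverges at least
logarithmically. -/
lemma le_setIntegral_ball_inv (hd : 1 ≤ d) (hd2 : d ≤ 2) {B lam : ℝ} (hB : 0 < B)
    (hlam : 0 < lam) :
    d * volume.real (Metric.ball (0 : Fin d → ℝ) 1) *
        ((log (lam + B) - log lam) / (2 * B)) ≤
      ∫ θ in Metric.ball (0 : Fin d → ℝ) 1, 1 / (lam + B * ‖θ‖ ^ 2) := by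
  have hne : ∀ r : ℝ, lam + B * r ^ 2 ≠ 0 := fun r => by positivity
  have : Nonempty (Fin d) := ⟨⟨0, hd⟩⟩
  have key := integral_fun_norm_addHaar (volume : Measure (Fin d → ℝ))
    (Set.indicator (Set.Iio (1 : ℝ)) fun r => 1 / (lam + B * r ^ 2))
  have hL : ∀ θ : Fin d → ℝ, Set.indicator (Set.Iio (1 : ℝ)) (fun r => 1 / (lam + B * r ^ 2)) ‖θ‖
      = Set.indicator (Metric.ball (0 : Fin d → ℝ) 1)
        (fun θ => 1 / (lam + B * ‖θ‖ ^ 2)) θ := fun θ => by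
    by_cases h : ‖θ‖ < 1
    · rw [Set.indicator_of_mem (Set.mem_Iio.2 h), Set.indicator_of_mem (mem_ball_zero_iff.2 h)]
    · rw [Set.indicator_of_notMem (mt Set.mem_Iio.1 h),
        Set.indicator_of_notMem (mt mem_ball_zero_iff.1 h)]
  simp only [hL] at key
  rw [integral_indicator measurableSet_ball] at key
  rw [key, ← integral_div_add_sq hB hlam, Module.finrank_fin_fun, nsmul_eq_mul, smul_eq_mul]
  rw [mul_assoc]
  refine mul_le_mul_of_nonneg_left (mul_le_mul_of_nonneg_left ?_ measureReal_nonneg)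
    (Nat.cast_nonneg d)
  have hR : ∀ r : ℝ, r ^ (d - 1) •
      Set.indicator (Set.Iio (1 : ℝ)) (fun r => 1 / (lam + B * r ^ 2)) r
      = Set.indicator (Set.Iio (1 : ℝ)) (fun r => r ^ (d - 1) / (lam + B * r ^ 2)) r :=
    fun r => by
      by_cases h : r < 1 <;> simp [h, div_eq_mul_inv]
  simp only [hR]
  rw [setIntegral_indicator measurableSet_Iio, Set.Ioi_inter_Iio,
    intervalIntegral.integral_of_le zero_le_one, integral_Ioc_eq_integral_Ioo]
  have hint : ∀ k : ℕ, IntegrableOn (fun r : ℝ => r ^ k / (lam + B * r ^ 2)) (Set.Ioo 0 1) :=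
    fun k => ((Continuous.div (by fun_prop) (by fun_prop) hne).continuousOn.integrableOn_compact
      isCompact_Icc).mono_set Set.Ioo_subset_Icc_self
  refine setIntegral_mono_on (by simpa using hint 1) (hint (d - 1)) measurableSet_Ioo
    fun r hr => ?_
  refine div_le_div_of_nonneg_right ?_ (by positivity)
  simpa using pow_le_pow_of_le_one hr.1.le hr.2.le (show d - 1 ≤ 1 by lia)

/-- Recurrence: in dimensions one and two the Green function blows up at the origin. -/
lemma tendsto_Glam_zero_atTop (hd : 1 ≤ d) (hd2 : d ≤ 2)
    (hpos : ∀ z : Fin d → ℤ, z ≠ 0 → 0 ≤ a z) (hsum : HasSum a 0)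
    (hvar : Summable fun z : Fin d → ℤ => (∑ i, ((z i : ℝ)) ^ 2) * a z) :
    Tendsto (fun lam => Glam d a lam 0 0) (𝓝[>] 0) atTop := by
  obtain ⟨B, hB, hφB⟩ := exists_neg_phiSymb_le hpos hsum hvar
  have hvol : 0 < volume.real (Metric.ball (0 : Fin d → ℝ) 1) :=
    ENNReal.toReal_pos (Metric.measure_ball_pos volume _ one_pos).ne' measure_ball_lt_top.ne
  have hdR : (0 : ℝ) < d := by exact_mod_cast hd
  have hlog : Tendsto (fun lam : ℝ => log (lam + B) - log lam) (𝓝[>] 0) atTop := by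
    have h1 : Tendsto (fun lam : ℝ => log (lam + B)) (𝓝[>] 0) (𝓝 (log B)) := by
      have : ContinuousAt (fun lam : ℝ => log (lam + B)) 0 :=
        ContinuousAt.log (by fun_prop) (by simpa using hB.ne')
      simpa using this.tendsto.mono_left nhdsWithin_le_nhds
    simp only [sub_eq_add_neg]
    exact h1.add_atTop (tendsto_neg_atBot_atTop.comp tendsto_log_nhdsGT_zero)
  have hlower : Tendsto (fun lam : ℝ => ((2 * π) ^ d)⁻¹ *
      (d * volume.real (Metric.ball (0 : Fin d → ℝ) 1) *
        ((log (lam + B) - log lam) / (2 * B)))) (𝓝[>] 0) atTop :=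
    ((hlog.atTop_div_const (by positivity)).const_mul_atTop (by positivity)).const_mul_atTop
      (by positivity)
  refine tendsto_atTop_mono' _ ?_ hlower
  filter_upwards [self_mem_nhdsWithin] with lam hlam
  have hlam : 0 < lam := hlam
  rw [Glam_eq_integral hpos hsum hlam]
  refine mul_le_mul_of_nonneg_left
    ((le_setIntegral_ball_inv hd hd2 hB hlam).trans ?_) (by positivity)
  have hint := integrableOn_cos_div hpos hsum hlam (0 : Fin d → ℤ)
  simp only [sub_zero, latticePairing_zero, cos_zero] at hint ⊢
  have hden : ∀ θ, 0 < lam - phiSymb d a θ := fun θ => by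
    linarith [neg_phiSymb_nonneg hpos hsum θ]
  refine (setIntegral_mono_on ?_ (hint.mono_set ball_one_subset_brillouinZone)
    measurableSet_ball fun θ _ => ?_).trans
    (setIntegral_mono_set hint (ae_of_all _ fun θ => (one_div_pos.2 (hden θ)).le)
      (LE.le.eventuallyLE ball_one_subset_brillouinZone))
  · refine IntegrableOn.mono_set (ContinuousOn.integrableOn_compact isCompact_brillouinZone
      (Continuous.continuousOn ?_)) ball_one_subset_brillouinZone
    exact Continuous.div (by fun_prop) (by fun_prop) fun θ => by positivity
  · exact one_div_le_one_div_of_le (hden θ) (by linarith [hφB θ])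

/-- If `g → ∞` while the increments `p`, `q`, `s` converge, the taboo quotient converges. -/
lemma tendsto_taboo_quotient {ι : Type*} {l : Filter ι} {g p q s : ι → ℝ} {P Q S : ℝ}
    (hg : Tendsto g l atTop) (hp : Tendsto p l (𝓝 P)) (hq : Tendsto q l (𝓝 Q))
    (hs : Tendsto s l (𝓝 S)) (hQ : Q ≠ 0) :
    Tendsto (fun n => ((g n - s n) * g n - (g n - p n) * (g n - q n)) /
      (g n ^ 2 - (g n - q n) ^ 2)) l (𝓝 ((P + Q - S) / (2 * Q))) := by
  have hi : Tendsto (fun n => (g n)⁻¹) l (𝓝 0) := hg.inv_tendsto_atTop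
  have h : Tendsto (fun n => (p n + q n - s n - p n * q n * (g n)⁻¹) /
      (q n * (2 - q n * (g n)⁻¹))) l
      (𝓝 ((P + Q - S - P * Q * 0) / (Q * (2 - Q * 0)))) :=
    (((hp.add hq).sub hs).sub ((hp.mul hq).mul hi)).div
      (hq.mul (tendsto_const_nhds.sub (hq.mul hi))) (by simpa using hQ)
  rw [mul_zero, mul_zero, sub_zero, sub_zero, mul_comm Q 2] at h
  refine h.congr' ?_
  filter_upwards [hg.eventually_gt_atTop 0] with n hn
  have h1 : (g n - s n) * g n - (g n - p n) * (g n - q n)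
      = g n * (p n + q n - s n - p n * q n * (g n)⁻¹) := by field_simp; ring
  have h2 : g n ^ 2 - (g n - q n) ^ 2 = g n * (q n * (2 - q n * (g n)⁻¹)) := by
    field_simp; ring
  rw [h1, h2, mul_div_mul_left _ _ hn.ne']

end TabooAux

/-- For `d ∈ {1,2}` and `x, y ≠ 0`, `x ≠ y`, the Laplace–Stieltjes transform of the taboo
hitting time converges as `λ → 0+` to `(ρ_d(x) + ρ_d(y) - ρ_d(y-x))/(2ρ_d(y))`. -/
theorem taboo_total_mass_low_dim
    (d : ℕ) (hd : 1 ≤ d) (a : (Fin d → ℤ) → ℝ)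
    (hpos : ∀ z : Fin d → ℤ, z ≠ 0 → 0 ≤ a z)
    (hneg : a 0 < 0)
    (hsymm : ∀ z : Fin d → ℤ, a (-z) = a z)
    (hsum : HasSum a 0)
    (hvar : Summable fun z : Fin d → ℤ => (∑ i, ((z i : ℝ)) ^ 2) * a z)
    (hirr : AddSubgroup.closure {z : Fin d → ℤ | 0 < a z} = ⊤)
    (hd12 : d = 1 ∨ d = 2) (x y : Fin d → ℤ) (hy : y ≠ 0) (hx : x ≠ 0) (hxy : x ≠ y) :
    Tendsto (fun lam : ℝ =>
        (Glam d a lam x y * Glam d a lam 0 0 - Glam d a lam 0 x * Glam d a lam 0 y) /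
          ((Glam d a lam 0 0) ^ 2 - (Glam d a lam 0 y) ^ 2))
      (𝓝[>] (0 : ℝ))
      (𝓝 ((rhoConst d a x + rhoConst d a y - rhoConst d a (y - x)) /
        (2 * rhoConst d a y))) := by
  have hP := tendsto_Glam_sub_Glam hpos hsum hirr 0 x
  have hQ := tendsto_Glam_sub_Glam hpos hsum hirr 0 y
  have hS := tendsto_Glam_sub_Glam hpos hsum hirr x y
  rw [sub_zero] at hP hQ
  have hlim := tendsto_taboo_quotient (tendsto_Glam_zero_atTop hd (by lia) hpos hsum hvar)
    hP hQ hS (potentialKernel_pos hpos hsum hirr hy).ne'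
  simp only [sub_sub_cancel] at hlim
  rw [rhoConst_eq x hx, rhoConst_eq y hy, rhoConst_eq (y - x) (sub_ne_zero.2 hxy.symm),
    ← mul_add, ← mul_sub, mul_left_comm, mul_div_mul_left _ _ (neg_ne_zero.2 hneg.ne)]
  exact hlim
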